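/- There exist absolute constants C₀ > 0 and c₁, c₂, c₃, c₄ ∈ (0,1] such that the following holds for every Lebesgue measurable set I ⊆ [0,1]. For (t_0, t_∞, s) ∈ I × I × ℝ define Ĩ_{t_0,t_∞,s} = {t ∈ I : s ≠ 0, t ≠ t_∞, u_{t_0,t_∞}(t,s) ∈ I, and |t̃ − t̂| ≥ c₁ ℒ¹(I) for every t̃ ∈ {t, u_{t_0,t_∞}(t,s)} and every t̂ ∈ {t_0, t_∞}}, where u_{t_0,t_∞}(t,s) = t_0 + (t_∞ − t_0)(t − t_0)/(s(t − t_∞)). Define 𝒫(I) = {(t_0, t_∞, s) ∈ I × I × [−C₀ ℒ¹(I)^{−2}, C₀ ℒ¹(I)^{−2}] : |t_0 − t_∞| ≥ c₂ ℒ¹(I) and ℒ¹(Ĩ_{t_0,t_∞,s}) ≥ c₃ ℒ¹(I)^6}. Then ∫_{𝒫(I)} ℒ¹(Ĩ_y) dy ≥ c₄ ℒ¹(I)^6. -/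

import Mathlib

open MeasureTheory ENNReal

noncomputable section

/-- `u_{t₀,t∞}(t,s) = t₀ + (t∞ - t₀)(t - t₀)/(s (t - t∞))`. -/
def uu (t₀ tinf t s : ℝ) : ℝ := t₀ + (tinf - t₀) * (t - t₀) / (s * (t - tinf))

/-- `Ĩ_{t₀,t∞,s}`: the set of `t ∈ I` such that `u_{t₀,t∞}(t,s) ∈ I` and both `t`
and `u_{t₀,t∞}(t,s)` are `≥ c₁ ℒ¹(I)`-separated from `t₀` and `t∞`. -/
def Itilde (c₁ : ℝ) (I : Set ℝ) (t₀ tinf s : ℝ) : Set ℝ :=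
  {t ∈ I | s ≠ 0 ∧ t ≠ tinf ∧ uu t₀ tinf t s ∈ I ∧
    ∀ ta ∈ ({t, uu t₀ tinf t s} : Set ℝ), ∀ tb ∈ ({t₀, tinf} : Set ℝ),
      c₁ * (volume I).toReal ≤ |ta - tb|}

/-- `𝒫(I)`: the set of favorable parameters `(t₀, t∞, s)`. -/
def Pset (C₀ c₁ c₂ c₃ : ℝ) (I : Set ℝ) : Set (ℝ × ℝ × ℝ) :=
  {y | y.1 ∈ I ∧ y.2.1 ∈ I ∧
    y.2.2 ∈ Set.Icc (-(C₀ * (volume I).toReal ^ (-2 : ℤ))) (C₀ * (volume I).toReal ^ (-2 : ℤ)) ∧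
    c₂ * (volume I).toReal ≤ |y.1 - y.2.1| ∧
    ENNReal.ofReal (c₃ * (volume I).toReal ^ 6) ≤ volume (Itilde c₁ I y.1 y.2.1 y.2.2)}

/-!
For fixed `t₀`, `t∞` and `t`, the map `s ↦ u_{t₀,t∞}(t,s) = t₀ + K / s` with
`K = (t∞ - t₀)(t - t₀)/(t - t∞)` is inverted by `u ↦ K / (u - t₀)`. When `I` has diameter at most
`D` and the points involved are `δ`-separated, `δ = c ℒ¹(I)`, this inverse takes values in
`[-(D/δ)², (D/δ)²]` and expands measure by at least `|K| / D² ≥ δ² / D³`. At least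
`(1 - 4c) ℒ¹(I)` of the points of `I` are `δ`-separated from any two given ones, so Fubini in
`(t₀, t∞, t, s)` bounds the integral of `ℒ¹(Ĩ)` over all separated triples `(t₀, t∞, s)` from below
by `c² (1 - 4c)³ D⁻³ ℒ¹(I)⁶`. These triples have total measure at most `2 (D/c)²`, whatever
`ℒ¹(I)` is, so those with `ℒ¹(Ĩ) < c₃ ℒ¹(I)⁶` account for at most half of this bound once `c₃` is
small enough.
-/

section MeasureBounds

variable {α β : Type*} [MeasurableSpace α] [MeasurableSpace β] {μ : Measure α} {ν : Measure β}

lemma mul_measure_le_setLIntegral {f : α → ℝ≥0∞} {s : Set α} {c : ℝ≥0∞} (hs : MeasurableSet s)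
    (hf : ∀ x ∈ s, c ≤ f x) : c * μ s ≤ ∫⁻ x in s, f x ∂μ :=
  (mul_le_mul_left (le_iInf₂ hf) _).trans (iInf_mul_le_setLIntegral f hs)

lemma mul_measure_le_lintegral_prod [SFinite ν] {f : α × β → ℝ≥0∞} {s : Set α} {c : ℝ≥0∞}
    (hf : Measurable f) (hs : MeasurableSet s) (hc : ∀ x ∈ s, c ≤ ∫⁻ y, f (x, y) ∂ν) :
    c * μ s ≤ ∫⁻ z, f z ∂(μ.prod ν) := by
  rw [lintegral_prod f hf.aemeasurable]
  exact (mul_measure_le_setLIntegral hs hc).trans (setLIntegral_le_lintegral s _)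

lemma setLIntegral_le_setLIntegral_superlevel_add {f : α → ℝ≥0∞} {s : Set α} (hf : Measurable f)
    (hs : MeasurableSet s) (ε : ℝ≥0∞) :
    ∫⁻ x in s, f x ∂μ ≤ ∫⁻ x in s ∩ {x | ε ≤ f x}, f x ∂μ + ε * μ s := by
  have hT : MeasurableSet {x | ε ≤ f x} := measurableSet_le measurable_const hf
  rw [← lintegral_inter_add_sdiff f s hT]
  gcongr
  calc ∫⁻ x in s \ {x | ε ≤ f x}, f x ∂μ
      ≤ ∫⁻ _ in s \ {x | ε ≤ f x}, ε ∂μ :=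
        setLIntegral_mono' (hs.diff hT) fun x hx => (not_le.1 hx.2).le
    _ = ε * μ (s \ {x | ε ≤ f x}) := setLIntegral_const _ _
    _ ≤ ε * μ s := by gcongr; exact Set.sdiff_subset

lemma ofReal_mul_volume_le_volume_image {f f' : ℝ → ℝ} {s : Set ℝ} {c : ℝ} (hs : MeasurableSet s)
    (hf : ∀ x ∈ s, HasDerivWithinAt f (f' x) s x) (hinj : Set.InjOn f s)
    (hc : ∀ x ∈ s, c ≤ |f' x|) : ENNReal.ofReal c * volume s ≤ volume (f '' s) := by
  rw [← setLIntegral_one (f '' s), lintegral_image_eq_lintegral_abs_deriv_mul hs hf hinj]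
  simp only [mul_one]
  exact mul_measure_le_setLIntegral hs fun x hx => ENNReal.ofReal_le_ofReal (hc x hx)

lemma ofReal_mul_volume_le_volume_image_div_sub {K a D : ℝ} {s : Set ℝ} (hs : MeasurableSet s)
    (ha : ∀ u ∈ s, u ≠ a) (hD : ∀ u ∈ s, |u - a| ≤ D) :
    ENNReal.ofReal (|K| / D ^ 2) * volume s ≤ volume ((fun u => K / (u - a)) '' s) := by
  rcases eq_or_ne K 0 with rfl | hK
  · simp
  have hne : ∀ u ∈ s, u - a ≠ 0 := fun u hu => sub_ne_zero.2 (ha u hu)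
  refine ofReal_mul_volume_le_volume_image (f' := fun u => -K / (u - a) ^ 2) hs
    (fun u hu => ?_) (fun u hu v hv huv => ?_) (fun u hu => ?_)
  · have hderiv := (hasDerivAt_const u K).fun_div ((hasDerivAt_id u).sub_const a) (hne u hu)
    simpa using hderiv.hasDerivWithinAt
  · rw [div_eq_div_iff (hne u hu) (hne v hv)] at huv
    exact (sub_left_injective (mul_left_cancel₀ hK huv)).symm
  · have hpos : 0 < (u - a) ^ 2 := sq_pos_of_ne_zero (hne u hu)
    have hle : (u - a) ^ 2 ≤ D ^ 2 := sq_le_sq.2 ((hD u hu).trans (le_abs_self D))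
    rw [abs_div, abs_neg, abs_of_pos hpos]
    gcongr

lemma pos_of_forall_abs_sub_le_of_volume_ne_zero {I : Set ℝ} {D : ℝ}
    (hD : ∀ x ∈ I, ∀ y ∈ I, |x - y| ≤ D) (hI : volume I ≠ 0) : 0 < D := by
  by_contra! hD_nonpos
  have hsub : I.Subsingleton := fun x hx y hy =>
    sub_eq_zero.1 (abs_nonpos_iff.1 ((hD x hx y hy).trans hD_nonpos))
  exact hI (hsub.measure_zero volume)

end MeasureBounds

section SeparatedPart

/-- The points of `I` at distance at least `δ` from both `a` and `b`: the domain to which the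
definition of `Itilde` confines both `t` and `u_{t₀,t∞}(t,s)`, with `δ = c₁ ℒ¹(I)`. -/
def separatedPart (I : Set ℝ) (δ a b : ℝ) : Set ℝ :=
  {u ∈ I | δ ≤ |u - a| ∧ δ ≤ |u - b|}

variable {I : Set ℝ} {δ a b : ℝ}

lemma measurableSet_setOf_mem_separatedPart {α : Type*} [MeasurableSpace α] {f g h : α → ℝ}
    (hI : MeasurableSet I) (hf : Measurable f) (hg : Measurable g) (hh : Measurable h) :
    MeasurableSet {x | f x ∈ separatedPart I δ (g x) (h x)} :=
  (hf hI).inter ((measurableSet_le measurable_const (hf.sub hg).abs).inter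
    (measurableSet_le measurable_const (hf.sub hh).abs))

lemma measurableSet_separatedPart (hI : MeasurableSet I) : MeasurableSet (separatedPart I δ a b) :=
  measurableSet_setOf_mem_separatedPart hI measurable_id measurable_const measurable_const

lemma subset_separatedPart_union_balls :
    I ⊆ separatedPart I δ a b ∪ (Metric.ball a δ ∪ Metric.ball b δ) := by
  intro u hu
  simp only [separatedPart, Set.mem_union, Set.mem_ofPred_eq, Metric.mem_ball, Real.dist_eq,
    ← not_le]
  tauto

lemma ofReal_sub_le_volume_separatedPart (hδ : 0 ≤ δ) :
    ENNReal.ofReal ((volume I).toReal - 4 * δ) ≤ volume (separatedPart I δ a b) := by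
  rw [ENNReal.ofReal_sub _ (by positivity), tsub_le_iff_right]
  calc ENNReal.ofReal (volume I).toReal ≤ volume I := ENNReal.ofReal_toReal_le
    _ ≤ volume (separatedPart I δ a b) +
          (volume (Metric.ball a δ) + volume (Metric.ball b δ)) :=
        (measure_mono subset_separatedPart_union_balls).trans
          ((measure_union_le _ _).trans (by gcongr; exact measure_union_le _ _))
    _ = volume (separatedPart I δ a b) + ENNReal.ofReal (4 * δ) := by
        rw [Real.volume_ball, Real.volume_ball,
          ← ENNReal.ofReal_add (by positivity) (by positivity)]
        ring_nf

end SeparatedPart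

section PoleCoeff

/-- The coefficient `K` for which `u_{t₀,t∞}(t,s) = t₀ + K / s`; equivalently, `s = K / (u - t₀)`
solves `u_{t₀,t∞}(t,s) = u`. -/
def poleCoeff (t₀ tinf t : ℝ) : ℝ := (tinf - t₀) * (t - t₀) / (t - tinf)

variable {t₀ tinf t u δ D : ℝ}

lemma poleCoeff_ne_zero (h : tinf ≠ t₀) (h₀ : t ≠ t₀) (hinf : t ≠ tinf) :
    poleCoeff t₀ tinf t ≠ 0 :=
  div_ne_zero (mul_ne_zero (sub_ne_zero.2 h) (sub_ne_zero.2 h₀)) (sub_ne_zero.2 hinf)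

-- At `u = t₀` the parameter is `K / 0 = 0`, for which division by zero makes `uu` equal to `t₀`.
lemma uu_poleCoeff_div_sub (h : tinf ≠ t₀) (h₀ : t ≠ t₀) (hinf : t ≠ tinf) :
    uu t₀ tinf t (poleCoeff t₀ tinf t / (u - t₀)) = u := by
  rw [uu, poleCoeff]
  field_simp
  ring

lemma abs_poleCoeff : |poleCoeff t₀ tinf t| = |t₀ - tinf| * |t - t₀| / |t - tinf| := by
  rw [poleCoeff, abs_div, abs_mul, abs_sub_comm tinf t₀]

lemma sq_div_le_abs_poleCoeff (hδ : 0 ≤ δ) (h : δ ≤ |t₀ - tinf|) (h₀ : δ ≤ |t - t₀|)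
    (hinf : t ≠ tinf) (hD : |t - tinf| ≤ D) : δ ^ 2 / D ≤ |poleCoeff t₀ tinf t| := by
  rw [abs_poleCoeff, sq]
  gcongr

lemma abs_poleCoeff_le_sq_div (hδ : 0 < δ) (hD : |t₀ - tinf| ≤ D) (hD₀ : |t - t₀| ≤ D)
    (hinf : δ ≤ |t - tinf|) : |poleCoeff t₀ tinf t| ≤ D ^ 2 / δ := by
  have hD_nonneg : 0 ≤ D := (abs_nonneg _).trans hD
  rw [abs_poleCoeff, sq]
  gcongr

end PoleCoeff

section Fibre

variable {I : Set ℝ} {c t₀ tinf t s δ D : ℝ}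

lemma le_volume_setOf_uu_mem_separatedPart (hI : MeasurableSet I)
    (hD : ∀ x ∈ I, ∀ y ∈ I, |x - y| ≤ D) (hδ : 0 < δ) (h₀ : t₀ ∈ I) (hinf : tinf ∈ I)
    (hsep : δ ≤ |t₀ - tinf|) (ht : t ∈ separatedPart I δ t₀ tinf) :
    ENNReal.ofReal (δ ^ 2 / D ^ 3) * volume (separatedPart I δ t₀ tinf) ≤
      volume {s ∈ Set.Icc (-(D / δ) ^ 2) ((D / δ) ^ 2) |
        s ≠ 0 ∧ uu t₀ tinf t s ∈ separatedPart I δ t₀ tinf} := by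
  obtain ⟨htI, ht₀, htinf⟩ := ht
  have hne : ∀ {x y : ℝ}, δ ≤ |x - y| → x ≠ y := fun h =>
    sub_ne_zero.1 (abs_pos.1 (hδ.trans_le h))
  set K := poleCoeff t₀ tinf t
  calc ENNReal.ofReal (δ ^ 2 / D ^ 3) * volume (separatedPart I δ t₀ tinf)
      ≤ ENNReal.ofReal (|K| / D ^ 2) * volume (separatedPart I δ t₀ tinf) := by
        gcongr ENNReal.ofReal ?_ * _
        rw [pow_succ' D 2, ← div_div]
        gcongr
        exact sq_div_le_abs_poleCoeff hδ.le hsep ht₀ (hne htinf) (hD t htI tinf hinf)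
    _ ≤ volume ((fun u => K / (u - t₀)) '' separatedPart I δ t₀ tinf) :=
        ofReal_mul_volume_le_volume_image_div_sub (measurableSet_separatedPart hI)
          (fun u hu => hne hu.2.1) fun u hu => hD u hu.1 t₀ h₀
    _ ≤ _ := measure_mono ?_
  rintro _ ⟨u, hu, rfl⟩
  have hKu : |K / (u - t₀)| ≤ (D / δ) ^ 2 := calc
    |K / (u - t₀)| = |K| / |u - t₀| := abs_div _ _
    _ ≤ D ^ 2 / δ / δ := by
        gcongr
        · exact abs_poleCoeff_le_sq_div hδ (hD t₀ h₀ tinf hinf) (hD t htI t₀ h₀) htinf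
        · exact hu.2.1
    _ = (D / δ) ^ 2 := by rw [div_div, div_pow, sq δ]
  have hsolve : uu t₀ tinf t (K / (u - t₀)) = u :=
    uu_poleCoeff_div_sub (hne hsep).symm (hne ht₀) (hne htinf)
  exact ⟨abs_le.1 hKu, div_ne_zero (poleCoeff_ne_zero (hne hsep).symm (hne ht₀) (hne htinf))
    (sub_ne_zero.2 (hne hu.2.1)), by rwa [hsolve]⟩

lemma mem_Itilde_iff : t ∈ Itilde c I t₀ tinf s ↔
    t ∈ separatedPart I (c * (volume I).toReal) t₀ tinf ∧ t ≠ tinf ∧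
      s ≠ 0 ∧ uu t₀ tinf t s ∈ separatedPart I (c * (volume I).toReal) t₀ tinf := by
  simp only [Itilde, separatedPart, Set.mem_ofPred_eq, Set.mem_insert_iff, Set.mem_singleton_iff,
    forall_eq_or_imp, forall_eq]
  tauto

lemma measurableSet_setOf_mem_Itilde (hI : MeasurableSet I) :
    MeasurableSet {p : (ℝ × ℝ × ℝ) × ℝ | p.2 ∈ Itilde c I p.1.1 p.1.2.1 p.1.2.2} := by
  have huu : Measurable fun p : (ℝ × ℝ × ℝ) × ℝ => uu p.1.1 p.1.2.1 p.2 p.1.2.2 := by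
    unfold uu
    fun_prop
  simp only [mem_Itilde_iff]
  exact (measurableSet_setOf_mem_separatedPart hI (by fun_prop) (by fun_prop) (by fun_prop)).inter
    ((measurableSet_eq_fun (by fun_prop) (by fun_prop)).compl.inter
      ((measurableSet_eq_fun (by fun_prop) (by fun_prop)).compl.inter
        (measurableSet_setOf_mem_separatedPart hI huu (by fun_prop) (by fun_prop))))

lemma measurable_volume_Itilde (hI : MeasurableSet I) :
    Measurable fun y : ℝ × ℝ × ℝ => volume (Itilde c I y.1 y.2.1 y.2.2) :=
  measurable_measure_prodMk_left (measurableSet_setOf_mem_Itilde hI)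

lemma setLIntegral_volume_Itilde (hI : MeasurableSet I) (S : Set ℝ) :
    ∫⁻ s in S, volume (Itilde c I t₀ tinf s) =
      ∫⁻ t, volume.restrict S {s | t ∈ Itilde c I t₀ tinf s} := by
  have hG : MeasurableSet {q : ℝ × ℝ | q.2 ∈ Itilde c I t₀ tinf q.1} :=
    (by fun_prop : Measurable fun q : ℝ × ℝ => ((t₀, tinf, q.1), q.2))
      (measurableSet_setOf_mem_Itilde hI)
  exact (Measure.prod_apply hG).symm.trans (Measure.prod_apply_symm hG)

lemma le_setLIntegral_volume_Itilde (hI : MeasurableSet I)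
    (hD : ∀ x ∈ I, ∀ y ∈ I, |x - y| ≤ D) (hδ : 0 < c * (volume I).toReal) (h₀ : t₀ ∈ I)
    (hinf : tinf ∈ I) (hsep : c * (volume I).toReal ≤ |t₀ - tinf|) :
    ENNReal.ofReal ((c * (volume I).toReal) ^ 2 / D ^ 3) *
        volume (separatedPart I (c * (volume I).toReal) t₀ tinf) ^ 2 ≤
      ∫⁻ s in Set.Icc (-(D / (c * (volume I).toReal)) ^ 2) ((D / (c * (volume I).toReal)) ^ 2),
        volume (Itilde c I t₀ tinf s) := by
  set δ := c * (volume I).toReal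
  rw [setLIntegral_volume_Itilde hI, sq (volume _), ← mul_assoc]
  refine (mul_measure_le_setLIntegral (measurableSet_separatedPart hI) fun t ht => ?_).trans
    (setLIntegral_le_lintegral (separatedPart I δ t₀ tinf) _)
  have htinf : t ≠ tinf := sub_ne_zero.1 (abs_pos.1 (hδ.trans_le ht.2.2))
  rw [Measure.restrict_apply' measurableSet_Icc]
  refine (le_volume_setOf_uu_mem_separatedPart hI hD hδ h₀ hinf hsep ht).trans
    (measure_mono fun s hs => ⟨mem_Itilde_iff.2 ⟨ht, htinf, hs.2⟩, hs.1⟩)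

end Fibre

section SeparatedTriples

/-- The triples `(t₀, t∞, s)` with `t₀, t∞ ∈ I` at distance at least `δ` and `|s| ≤ R`: the set
`Pset` without its lower bound on `volume (Itilde …)`. -/
def separatedTriples (I : Set ℝ) (δ R : ℝ) : Set (ℝ × ℝ × ℝ) :=
  {y | y.1 ∈ I ∧ y.2.1 ∈ I ∧ y.2.2 ∈ Set.Icc (-R) R ∧ δ ≤ |y.1 - y.2.1|}

variable {I : Set ℝ} {c D δ R : ℝ}

lemma measurableSet_separatedTriples (hI : MeasurableSet I) :
    MeasurableSet (separatedTriples I δ R) :=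
  (measurable_fst hI).inter ((measurable_snd.fst hI).inter
    ((measurable_snd.snd measurableSet_Icc).inter
      (measurableSet_le measurable_const (measurable_fst.sub measurable_snd.fst).abs)))

lemma volume_separatedTriples_le :
    volume (separatedTriples I δ R) ≤ volume I * (volume I * ENNReal.ofReal (2 * R)) := by
  have hsub : separatedTriples I δ R ⊆ I ×ˢ I ×ˢ Set.Icc (-R) R :=
    fun y hy => ⟨hy.1, hy.2.1, hy.2.2.1⟩
  refine (measure_mono hsub).trans_eq ?_
  rw [Measure.volume_eq_prod, Measure.prod_prod, Measure.volume_eq_prod, Measure.prod_prod,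
    Real.volume_Icc, sub_neg_eq_add, two_mul]

lemma Pset_div_sq_eq_separatedTriples_inter (D c c₁ c₃ : ℝ) :
    Pset ((D / c) ^ 2) c₁ c c₃ I =
      separatedTriples I (c * (volume I).toReal) ((D / (c * (volume I).toReal)) ^ 2) ∩
        {y | ENNReal.ofReal (c₃ * (volume I).toReal ^ 6) ≤
          volume (Itilde c₁ I y.1 y.2.1 y.2.2)} := by
  have hR : (D / c) ^ 2 * (volume I).toReal ^ (-2 : ℤ) = (D / (c * (volume I).toReal)) ^ 2 := by
    rw [← div_div, div_pow (D / c), zpow_neg, zpow_ofNat, ← div_eq_mul_inv]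
  ext y
  simp only [Pset, hR, separatedTriples, Set.mem_inter_iff, Set.mem_ofPred_eq, and_assoc]

lemma le_setLIntegral_separatedTriples_volume_Itilde (hI : MeasurableSet I)
    (hD : ∀ x ∈ I, ∀ y ∈ I, |x - y| ≤ D) (hδ : 0 < c * (volume I).toReal) :
    ENNReal.ofReal ((c * (volume I).toReal) ^ 2 / D ^ 3) *
        ENNReal.ofReal ((volume I).toReal - 4 * (c * (volume I).toReal)) ^ 3 * volume I ≤
      ∫⁻ y in separatedTriples I (c * (volume I).toReal) ((D / (c * (volume I).toReal)) ^ 2),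
        volume (Itilde c I y.1 y.2.1 y.2.2) := by
  set δ := c * (volume I).toReal
  set V := ENNReal.ofReal ((volume I).toReal - 4 * δ)
  set T := separatedTriples I δ ((D / δ) ^ 2)
  set f := fun y : ℝ × ℝ × ℝ => volume (Itilde c I y.1 y.2.1 y.2.2)
  have hV : ∀ a b, V ≤ volume (separatedPart I δ a b) :=
    fun a b => ofReal_sub_le_volume_separatedPart hδ.le
  have hTm : MeasurableSet T := measurableSet_separatedTriples hI
  have hfm : Measurable (T.indicator f) := (measurable_volume_Itilde hI).indicator hTm
  rw [← lintegral_indicator hTm]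
  refine mul_measure_le_lintegral_prod (ν := volume) hfm hI fun t₀ h₀ => ?_
  rw [pow_succ V 2, ← mul_assoc]
  refine (mul_le_mul_right (hV t₀ t₀) _).trans (mul_measure_le_lintegral_prod (ν := volume)
    (hfm.comp measurable_prodMk_left) (measurableSet_separatedPart hI) fun tinf hinf => ?_)
  have hsep : δ ≤ |t₀ - tinf| := abs_sub_comm tinf t₀ ▸ hinf.2.1
  calc ENNReal.ofReal (δ ^ 2 / D ^ 3) * V ^ 2
      ≤ ENNReal.ofReal (δ ^ 2 / D ^ 3) * volume (separatedPart I δ t₀ tinf) ^ 2 := by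
        gcongr
        exact hV t₀ tinf
    _ ≤ ∫⁻ s in Set.Icc (-(D / δ) ^ 2) ((D / δ) ^ 2), f (t₀, tinf, s) :=
        le_setLIntegral_volume_Itilde hI hD hδ h₀ hinf.1 hsep
    _ = ∫⁻ s, T.indicator f (t₀, tinf, s) := by
        rw [← lintegral_indicator measurableSet_Icc]
        refine lintegral_congr fun s => Set.indicator_eq_indicator ?_ rfl
        exact ⟨fun hs => ⟨h₀, hinf.1, hs, hsep⟩, fun hs => hs.2.2.1⟩

lemma ofReal_mul_pow_le_setLIntegral_separatedTriples (hI : MeasurableSet I)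
    (hD : ∀ x ∈ I, ∀ y ∈ I, |x - y| ≤ D) (hc : 0 < c) (hc' : 4 * c ≤ 1)
    (hm : 0 < (volume I).toReal) :
    ENNReal.ofReal (c ^ 2 * (1 - 4 * c) ^ 3 / D ^ 3 * (volume I).toReal ^ 6) ≤
      ∫⁻ y in separatedTriples I (c * (volume I).toReal) ((D / (c * (volume I).toReal)) ^ 2),
        volume (Itilde c I y.1 y.2.1 y.2.2) := by
  have hD₀ : 0 < D :=
    pos_of_forall_abs_sub_le_of_volume_ne_zero hD (ENNReal.toReal_pos_iff.1 hm).1.ne'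
  set m := (volume I).toReal
  have hm' : 0 ≤ m - 4 * (c * m) := by nlinarith
  calc ENNReal.ofReal (c ^ 2 * (1 - 4 * c) ^ 3 / D ^ 3 * m ^ 6)
      = ENNReal.ofReal ((c * m) ^ 2 / D ^ 3 * (m - 4 * (c * m)) ^ 3 * m) := by ring_nf
    _ = ENNReal.ofReal ((c * m) ^ 2 / D ^ 3) * ENNReal.ofReal (m - 4 * (c * m)) ^ 3 *
          ENNReal.ofReal m := by
        rw [ENNReal.ofReal_mul (by positivity), ENNReal.ofReal_mul (by positivity),
          ENNReal.ofReal_pow hm']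
    _ ≤ ENNReal.ofReal ((c * m) ^ 2 / D ^ 3) * ENNReal.ofReal (m - 4 * (c * m)) ^ 3 *
          volume I := by
        gcongr
        exact ENNReal.ofReal_toReal_le
    _ ≤ _ := le_setLIntegral_separatedTriples_volume_Itilde hI hD (by positivity)

lemma volume_separatedTriples_le_ofReal (hm : 0 < (volume I).toReal) :
    volume (separatedTriples I δ ((D / (c * (volume I).toReal)) ^ 2)) ≤
      ENNReal.ofReal (2 * (D / c) ^ 2) := by
  have hvol : volume I = ENNReal.ofReal (volume I).toReal :=
    (ENNReal.ofReal_toReal (ENNReal.toReal_pos_iff.1 hm).2.ne).symm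
  refine volume_separatedTriples_le.trans_eq ?_
  set m := (volume I).toReal
  rw [hvol, ← ENNReal.ofReal_mul hm.le, ← ENNReal.ofReal_mul hm.le]
  congr 1
  field_simp

end SeparatedTriples

theorem statement17_general {I : Set ℝ} {c D : ℝ} (hI : MeasurableSet I)
    (hD : ∀ x ∈ I, ∀ y ∈ I, |x - y| ≤ D) (hc : 0 < c) (hc' : 4 * c ≤ 1) :
    ENNReal.ofReal (c ^ 2 * (1 - 4 * c) ^ 3 / (2 * D ^ 3) * (volume I).toReal ^ 6) ≤
      ∫⁻ y in Pset ((D / c) ^ 2) c c (c ^ 4 * (1 - 4 * c) ^ 3 / (4 * D ^ 5)) I,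
        volume (Itilde c I y.1 y.2.1 y.2.2) := by
  rcases eq_or_ne (volume I).toReal 0 with hm | hm
  · simp [hm]
  replace hm : 0 < (volume I).toReal := ENNReal.toReal_nonneg.lt_of_ne' hm
  have hD₀ : 0 < D :=
    pos_of_forall_abs_sub_le_of_volume_ne_zero hD (ENNReal.toReal_pos_iff.1 hm).1.ne'
  rw [Pset_div_sq_eq_separatedTriples_inter]
  set m := (volume I).toReal
  set T := separatedTriples I (c * m) ((D / (c * m)) ^ 2)
  set ε := ENNReal.ofReal (c ^ 4 * (1 - 4 * c) ^ 3 / (4 * D ^ 5) * m ^ 6) with hε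
  set half := ENNReal.ofReal (c ^ 2 * (1 - 4 * c) ^ 3 / (2 * D ^ 3) * m ^ 6) with hhalf
  have hfull : half + half ≤ ∫⁻ y in T, volume (Itilde c I y.1 y.2.1 y.2.2) := by
    refine Eq.trans_le ?_ (ofReal_mul_pow_le_setLIntegral_separatedTriples hI hD hc hc' hm)
    rw [hhalf, ← ENNReal.ofReal_add (by positivity) (by positivity)]
    congr 1
    ring
  have hdiscarded : ε * volume T ≤ half := calc
    ε * volume T ≤ ε * ENNReal.ofReal (2 * (D / c) ^ 2) := by
      gcongr
      exact volume_separatedTriples_le_ofReal hm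
    _ = half := by
      rw [hε, hhalf, ← ENNReal.ofReal_mul (by positivity)]
      congr 1
      field_simp
      ring
  refine (ENNReal.add_le_add_iff_right (ENNReal.ofReal_ne_top : half ≠ ∞)).1 (hfull.trans ?_)
  exact (setLIntegral_le_setLIntegral_superlevel_add (measurable_volume_Itilde hI)
    (measurableSet_separatedTriples hI) ε).trans (by gcongr)

/-- Claim 3 (uniformization): there are absolute constants `C₀, c₁, c₂, c₃, c₄`
such that for every measurable `I ⊆ [0,1]`,
`∫_{𝒫(I)} ℒ¹(Ĩ_y) dy ≥ c₄ ℒ¹(I)⁶`. -/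
theorem statement17 :
    ∃ C₀ : ℝ, 0 < C₀ ∧
    ∃ c₁ ∈ Set.Ioc (0:ℝ) 1, ∃ c₂ ∈ Set.Ioc (0:ℝ) 1,
    ∃ c₃ ∈ Set.Ioc (0:ℝ) 1, ∃ c₄ ∈ Set.Ioc (0:ℝ) 1,
      ∀ I : Set ℝ, I ⊆ Set.Icc (0:ℝ) 1 → MeasurableSet I →
        ENNReal.ofReal (c₄ * (volume I).toReal ^ 6) ≤
          ∫⁻ y in Pset C₀ c₁ c₂ c₃ I, volume (Itilde c₁ I y.1 y.2.1 y.2.2) := by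
  refine ⟨64, by norm_num, 1 / 8, by norm_num, 1 / 8, by norm_num, 1 / 131072, by norm_num,
    1 / 1024, by norm_num, fun I hI01 hI => ?_⟩
  have hdiam : ∀ x ∈ I, ∀ y ∈ I, |x - y| ≤ 1 := fun x hx y hy =>
    (abs_sub_le_of_le_of_le (hI01 hx).1 (hI01 hx).2 (hI01 hy).1 (hI01 hy).2).trans_eq (sub_zero 1)
  convert statement17_general (c := 1 / 8) hI hdiam (by norm_num) (by norm_num) using 3 <;> norm_num

end
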